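/- arXiv:2603.03310 — 5 statements merged into one kernel-verified Lean document; each statement's English description precedes it below -/
import Mathlib

section
/- Let V be a finite set with |V| elements and p : V → ℝ a probability mass function (p x ≥ 0 for all x and ∑_{x∈V} p x = 1). Let K ⊆ V be a subset with k elements, 1 ≤ k < |V|, let m = ∑_{x∈K} p x and m̄ = 1 − m, and assume m > 0. Define the truncated entropy H̃ = −∑_{x∈K} (p x / m) log(p x / m). Then the Shannon entropy of p satisfies the tail-corrected upper bound H(p) ≤ H̃ + h(m̄) + m̄ · log(|V| − k), where h(q) = −q log q − (1−q) log(1−q) is the binary entropy function. -/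
/-!
By the chain rule for entropy applied to the split `K`, `Kᶜ`,
`H(p) = h(1 - m) + m * H(p | K) + (1 - m) * H(p | Kᶜ)`, where `H(p | K)` is the truncated entropy.
Since the truncated entropy is nonnegative and `m ≤ 1`, the second term is at most `H(p | K)`;
the last one is at most `(1 - m) * log (|V| - k)`, because entropy is maximal at the uniform
distribution. The proof never divides by `1 - m`, which may vanish: `neg_sum_mul_log_le` bounds the
unnormalised sum over `Kᶜ` directly.
-/


open Real Finset

/-- Shannon entropy of a pmf `p` on a finite type, with the convention `0 * log 0 = 0`. -/
noncomputable def shannonEntropy {V : Type*} [Fintype V] (p : V → ℝ) : ℝ :=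
  -∑ x, p x * Real.log (p x)

/-- Binary entropy function. -/
noncomputable def binaryEntropy (q : ℝ) : ℝ :=
  -q * Real.log q - (1 - q) * Real.log (1 - q)

/-- Maximality of the uniform distribution, for a nonnegative family of arbitrary total mass `S`.
It is Jensen's inequality for the convex function `x ↦ x * log x`. -/
lemma neg_sum_mul_log_le {V : Type*} (T : Finset V) (hT : T.Nonempty) (f : V → ℝ)
    (hf : ∀ x, 0 ≤ f x) (S : ℝ) (hS : ∑ x ∈ T, f x = S) :
    -∑ x ∈ T, f x * Real.log (f x) ≤ -(S * Real.log S) + S * Real.log (T.card : ℝ) := by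
  have hn : (0 : ℝ) < T.card := by exact_mod_cast hT.card_pos
  have hJ := Real.convexOn_mul_log.map_sum_le (t := T) (w := fun _ => (T.card : ℝ)⁻¹) (p := f)
    (fun _ _ => by positivity) (by simp [hn.ne']) (fun x _ => hf x)
  simp only [smul_eq_mul, ← Finset.mul_sum, hS] at hJ
  rw [mul_assoc] at hJ
  have hJ' := le_of_mul_le_mul_left hJ (by positivity)
  rcases eq_or_ne S 0 with h0 | h0
  · simp only [h0, zero_mul] at hJ' ⊢
    linarith
  · rw [Real.log_mul (by positivity) h0, Real.log_inv] at hJ'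
    linarith

/-- Tail-corrected upper bound on Shannon entropy from the top-`k` truncated entropy. -/
theorem entropy_tail_corrected_upper_bound {V : Type*} [Fintype V] (p : V → ℝ) (K : Finset V)
    (hp : ∀ x, 0 ≤ p x) (hsum : ∑ x, p x = 1)
    (k : ℕ) (hk : k = K.card) (hk1 : 1 ≤ k) (hklt : k < Fintype.card V)
    (m : ℝ) (hm : m = ∑ x ∈ K, p x) (hm0 : 0 < m) :
    shannonEntropy p
      ≤ (-∑ x ∈ K, (p x / m) * Real.log (p x / m))
        + binaryEntropy (1 - m)
        + (1 - m) * Real.log ((Fintype.card V : ℝ) - (k : ℝ)) := by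
  classical
  have hcompl : ∑ x ∈ Kᶜ, p x = 1 - m := by
    have := Finset.sum_add_sum_compl K p
    linarith
  have hm1 : m ≤ 1 := by
    have := Finset.sum_nonneg (s := Kᶜ) (fun x _ => hp x)
    linarith
  have hcard : ((Kᶜ).card : ℝ) = (Fintype.card V : ℝ) - (k : ℝ) := by
    rw [Finset.card_compl, ← hk, Nat.cast_sub hklt.le]
  have hne : (Kᶜ).Nonempty := by
    rw [← Finset.card_pos, Finset.card_compl, ← hk]
    omega
  have htail := neg_sum_mul_log_le Kᶜ hne p hp (1 - m) hcompl
  rw [hcard] at htail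
  have hsplit := Finset.sum_add_sum_compl K (fun x => p x * Real.log (p x))
  -- The head contribution is `m` times the truncated entropy, up to the term `m * log m`.
  have hhead : ∑ x ∈ K, p x * Real.log (p x)
      = m * ∑ x ∈ K, (p x / m) * Real.log (p x / m) + m * Real.log m := by
    have hmlog : m * Real.log m = ∑ x ∈ K, p x * Real.log m := by
      rw [← Finset.sum_mul, ← hm]
    rw [hmlog, Finset.mul_sum, ← Finset.sum_add_distrib]
    refine Finset.sum_congr rfl fun x _ => ?_
    rcases eq_or_ne (p x) 0 with h0 | h0
    · simp [h0]
    · rw [Real.log_div h0 hm0.ne']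
      field_simp
      ring
  have hnonpos : ∑ x ∈ K, (p x / m) * Real.log (p x / m) ≤ 0 := by
    refine Finset.sum_nonpos fun x hx => Real.mul_log_nonpos (div_nonneg (hp x) hm0.le) ?_
    rw [div_le_one hm0, hm]
    exact Finset.single_le_sum (fun y _ => hp y) hx
  have hscale := mul_nonpos_of_nonneg_of_nonpos (sub_nonneg.2 hm1) hnonpos
  unfold shannonEntropy binaryEntropy
  rw [sub_sub_cancel]
  linarith
end

section
/- (Proposition 1, Local Contractivity, precise form.) Let H : ℝ → ℝ be differentiable at T* with H(T*) = H*, let η > 0, and suppose −2 < η · T* · H'(T*) < 0. Then the temperature update map F(T) = T · exp(η (H(T) − H*)) is locally contractive at its fixed point T*: there exist q ∈ [0,1) and δ > 0 such that for all T with |T − T*| ≤ δ, |F(T) − T*| ≤ q · |T − T*|. In particular, T* is the unique fixed point of F in the interval [T* − δ, T* + δ]. -/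
/-!
The map `F T = T * exp (η * (H T - Hstar))` has derivative `a = 1 + η * Tstar * H'` at its fixed
point `Tstar`, and the hypotheses say exactly that `|a| < 1`. First-order expansion of `F` at
`Tstar`, with the remainder at most `(1 - |a|) / 2 * |T - Tstar|` near `Tstar`, gives the
contraction factor `q = (1 + |a|) / 2 < 1`. A second fixed point in the same interval would
satisfy `|T - Tstar| ≤ q * |T - Tstar|` with `|T - Tstar| > 0`, which is impossible.
-/

open Real

/-- Proposition 1 (Local Contractivity, precise form): if `H(T*) = H*`, `η > 0` and
`−2 < η T* H'(T*) < 0`, then `F(T) = T · exp(η (H(T) − H*))` is locally contractive at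
its fixed point `T*`, and `T*` is the unique fixed point of `F` near `T*`. -/
theorem local_contractivity (H : ℝ → ℝ) (Tstar Hstar η H' : ℝ)
    (hH : HasDerivAt H H' Tstar) (hfix : H Tstar = Hstar)
    (hη : 0 < η) (hlb : -2 < η * Tstar * H') (hub : η * Tstar * H' < 0) :
    ∃ q δ : ℝ, 0 ≤ q ∧ q < 1 ∧ 0 < δ ∧
      (∀ T : ℝ, |T - Tstar| ≤ δ →
        |T * Real.exp (η * (H T - Hstar)) - Tstar| ≤ q * |T - Tstar|) ∧
      (∀ T : ℝ, T ∈ Set.Icc (Tstar - δ) (Tstar + δ) →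
        T * Real.exp (η * (H T - Hstar)) = T → T = Tstar) := by
  set F : ℝ → ℝ := fun T => T * Real.exp (η * (H T - Hstar)) with hF
  set a : ℝ := 1 + η * Tstar * H' with ha
  have hFstar : F Tstar = Tstar := by simp [hF, hfix]
  have hderiv : HasDerivAt F a Tstar := by
    have h := (hasDerivAt_id Tstar).mul (((hH.sub_const Hstar).const_mul η).exp)
    refine h.congr_deriv ?_
    simp only [id, hfix, sub_self, mul_zero, Real.exp_zero, ha]
    ring
  have ha1 : |a| < 1 := abs_lt.mpr ⟨by linarith, by linarith⟩
  have hc : 0 < (1 - |a|) / 2 := by linarith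
  have hev := hderiv.isLittleO.def hc
  obtain ⟨δ, hδ, hball⟩ := Metric.nhds_basis_closedBall.eventually_iff.mp hev
  have hcontr : ∀ T : ℝ, |T - Tstar| ≤ δ → |F T - Tstar| ≤ (1 + |a|) / 2 * |T - Tstar| := by
    intro T hT
    have h := hball (x := T) (by rwa [Metric.mem_closedBall, Real.dist_eq])
    simp only [hFstar, Real.norm_eq_abs, smul_eq_mul] at h
    calc |F T - Tstar| = |(F T - Tstar - (T - Tstar) * a) + (T - Tstar) * a| := by ring_nf
      _ ≤ |F T - Tstar - (T - Tstar) * a| + |(T - Tstar) * a| := abs_add_le _ _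
      _ ≤ (1 - |a|) / 2 * |T - Tstar| + |T - Tstar| * |a| := by
          rw [abs_mul]
          gcongr
      _ = (1 + |a|) / 2 * |T - Tstar| := by ring
  refine ⟨(1 + |a|) / 2, δ, by positivity, by linarith, hδ, hcontr, ?_⟩
  intro T hT hTfix
  have h := hcontr T (abs_le.mpr ⟨by linarith [hT.1], by linarith [hT.2]⟩)
  rw [show F T = T from hTfix] at h
  by_contra hne
  have hpos : 0 < |T - Tstar| := abs_pos.mpr (sub_ne_zero.mpr hne)
  nlinarith
end

section
/- Let g : ℝ → ℝ, x* ∈ ℝ, r > 0, μ > 0, κ ≥ μ, and η > 0 with η μ ≤ 1 and η (κ + μ) ≤ 2. Assume the local monotone slope condition: for all δ with |δ| ≤ r, δ · (g(x* + δ) − g(x*)) ≤ −μ δ², and the local Lipschitz condition: for all δ with |δ| ≤ r, |g(x* + δ) − g(x*)| ≤ κ |δ|. Then for any δ_t with |δ_t| ≤ r and any e_t ∈ ℝ, the perturbed update δ_{t+1} = δ_t + η (g(x* + δ_t) − g(x*)) + η e_t satisfies |δ_{t+1}| ≤ (1 − η μ) |δ_t| + η |e_t|. -/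
/-!
The unperturbed step already contracts: the slope bound makes the increment point back toward
the equilibrium by at least `η μ |δt|`, and the Lipschitz bound with `η (κ + μ) ≤ 2` keeps it
from overshooting by more than `(1 - η μ) |δt|`. The estimation error then enters through the
triangle inequality.
-/

/-- Under a local monotone slope condition (restoring slope `μ`) and local Lipschitz
condition (constant `κ`), the perturbed error update contracts:
`|δ_{t+1}| ≤ (1 − η μ) |δ_t| + η |e_t|` whenever `|δ_t| ≤ r`. -/
theorem perturbed_update_contraction (g : ℝ → ℝ) (xstar r μ κ η : ℝ)
    (hr : 0 < r) (hμ : 0 < μ) (hκ : μ ≤ κ) (hη : 0 < η)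
    (hημ : η * μ ≤ 1) (hηκμ : η * (κ + μ) ≤ 2)
    (hslope : ∀ δ : ℝ, |δ| ≤ r → δ * (g (xstar + δ) - g xstar) ≤ -μ * δ ^ 2)
    (hlip : ∀ δ : ℝ, |δ| ≤ r → |g (xstar + δ) - g xstar| ≤ κ * |δ|) :
    ∀ δt et : ℝ, |δt| ≤ r →
      |δt + η * (g (xstar + δt) - g xstar) + η * et|
        ≤ (1 - η * μ) * |δt| + η * |et| := by
  intro δt et hδ
  have h1 := hslope δt hδ
  have h2 := hlip δt hδ
  generalize g (xstar + δt) - g xstar = d at h1 h2 ⊢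
  -- For `δt > 0` the slope and Lipschitz bounds give `-κ δt ≤ d ≤ -μ δt`, so `δt + η d` lies in
  -- `[(1 - η κ) δt, (1 - η μ) δt]`, and `η (κ + μ) ≤ 2` says `1 - η κ ≥ -(1 - η μ)`.
  -- The case `δt < 0` is symmetric.
  have key : |δt + η * d| ≤ (1 - η * μ) * |δt| := by
    rcases lt_trichotomy δt 0 with h | h | h
    · rw [abs_of_neg h] at h2 ⊢
      have hd : -μ * δt ≤ d := by
        by_contra! hc
        nlinarith [mul_pos_of_neg_of_neg h (sub_neg.mpr hc)]
      have hd' := (abs_le.mp h2).2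
      rw [abs_le]
      constructor
      · nlinarith [mul_le_mul_of_nonneg_left hd hη.le]
      · nlinarith [mul_le_mul_of_nonneg_left hd' hη.le,
          mul_nonneg (sub_nonneg.mpr hηκμ) (neg_pos.mpr h).le]
    · subst h
      have hd : d = 0 := by simpa using h2
      simp [hd]
    · rw [abs_of_pos h] at h2 ⊢
      have hd : d ≤ -μ * δt := by
        by_contra! hc
        nlinarith [mul_pos h (sub_pos.mpr hc)]
      have hd' := (abs_le.mp h2).1
      rw [abs_le]
      constructor
      · nlinarith [mul_le_mul_of_nonneg_left hd' hη.le,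
          mul_nonneg (sub_nonneg.mpr hηκμ) h.le]
      · nlinarith [mul_le_mul_of_nonneg_left hd hη.le]
  calc |δt + η * d + η * et| ≤ |δt + η * d| + |η * et| := abs_add_le _ _
    _ ≤ (1 - η * μ) * |δt| + η * |et| := by
      rw [abs_mul, abs_of_pos hη]
      gcongr
end

section
/- (Theorem: Local ISS robustness to bounded entropy error.) Let g : ℝ → ℝ, x* ∈ ℝ, r > 0, μ > 0, κ ≥ μ, ε_H ≥ 0, and η > 0 with 0 < η μ < 1 and η (κ + μ) ≤ 2. Assume: (i) for all δ with |δ| ≤ r, δ · (g(x* + δ) − g(x*)) ≤ −μ δ² and |g(x* + δ) − g(x*)| ≤ κ |δ|; (ii) the sequences δ, e : ℕ → ℝ satisfy δ_{t+1} = δ_t + η (g(x* + δ_t) − g(x*)) + η e_t with |e_t| ≤ ε_H for all t; and (iii) |δ_t| ≤ r for all t. Then, writing a = 1 − η μ ∈ (0,1), for every t ∈ ℕ: |δ_t| ≤ a^t |δ_0| + (η / (1 − a)) ε_H = a^t |δ_0| + ε_H / μ. In particular, the log-temperature error converges exponentially to the neighborhood of radius ε_H/μ around 0. -/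
/-!
Put `a = 1 - η μ`. The noiseless map `d ↦ d + η G`, with `G = g (x* + d) - g x*`, contracts by the
factor `a`: for `d > 0` the slope condition gives `G ≤ -μ d` and the Lipschitz bound gives
`G ≥ -κ d`, so `(1 - η κ) d ≤ d + η G ≤ a d`, and `1 - η κ ≥ -a` is exactly `η (κ + μ) ≤ 2`
(`abs_step_le`). With noise, `|δ (t + 1)| ≤ a |δ t| + η εH`, and `εH / μ` is the fixed point of
`y ↦ a y + η εH`, so the bound follows by induction on `t`.
-/

/-- One noiseless step contracts by `1 - η μ`. The slope bound controls the step on the side of `d`,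
while the Lipschitz bound and `η (κ + μ) ≤ 2` limit the overshoot past `0`. -/
theorem abs_step_le {d G μ κ η : ℝ} (hη : 0 < η) (hηκμ : η * (κ + μ) ≤ 2)
    (hslope : d * G ≤ -μ * d ^ 2) (hlip : |G| ≤ κ * |d|) :
    |d + η * G| ≤ (1 - η * μ) * |d| := by
  obtain ⟨h1, h2⟩ := abs_le.mp hlip
  rcases lt_trichotomy d 0 with hd | rfl | hd
  · rw [abs_of_neg hd] at *
    have hG : -μ * d ≤ G := by
      by_contra! h
      nlinarith [mul_pos_of_neg_of_neg hd (sub_neg.mpr h)]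
    have h3 := mul_le_mul_of_nonneg_left hG hη.le
    have h4 := mul_le_mul_of_nonneg_left h2 hη.le
    have h5 := mul_le_mul_of_nonneg_right hηκμ (neg_pos.mpr hd).le
    rw [abs_le]
    constructor <;> linarith
  · have hG : G = 0 := by simpa using hlip
    simp [hG]
  · rw [abs_of_pos hd] at *
    have hG : G ≤ -μ * d := by
      by_contra! h
      nlinarith [mul_pos hd (sub_pos.mpr h)]
    have h3 := mul_le_mul_of_nonneg_left hG hη.le
    have h4 := mul_le_mul_of_nonneg_left h1 hη.le
    have h5 := mul_le_mul_of_nonneg_right hηκμ hd.le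
    rw [abs_le]
    constructor <;> linarith

/-- Theorem (Local ISS robustness to bounded entropy error): under the local monotone
slope and Lipschitz conditions, with gain `0 < η μ < 1`, `η (κ + μ) ≤ 2`, bounded
estimation noise `|e_t| ≤ ε_H`, and trajectories remaining in the neighborhood
`|δ_t| ≤ r`, the log-temperature error satisfies, with `a = 1 − η μ ∈ (0,1)`,
`|δ_t| ≤ a^t |δ_0| + (η/(1−a)) ε_H = a^t |δ_0| + ε_H/μ`. -/
theorem local_iss_robustness (g : ℝ → ℝ) (xstar r μ κ εH η : ℝ)
    (δ e : ℕ → ℝ)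
    (hr : 0 < r) (hμ : 0 < μ) (hκ : μ ≤ κ) (hεH : 0 ≤ εH) (hη : 0 < η)
    (hημ0 : 0 < η * μ) (hημ1 : η * μ < 1) (hηκμ : η * (κ + μ) ≤ 2)
    (hslope : ∀ d : ℝ, |d| ≤ r → d * (g (xstar + d) - g xstar) ≤ -μ * d ^ 2)
    (hlip : ∀ d : ℝ, |d| ≤ r → |g (xstar + d) - g xstar| ≤ κ * |d|)
    (hupd : ∀ t, δ (t + 1) = δ t + η * (g (xstar + δ t) - g xstar) + η * e t)
    (hnoise : ∀ t, |e t| ≤ εH)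
    (hinN : ∀ t, |δ t| ≤ r) :
    0 < 1 - η * μ ∧ 1 - η * μ < 1 ∧
    η / (1 - (1 - η * μ)) * εH = εH / μ ∧
    ∀ t : ℕ, |δ t| ≤ (1 - η * μ) ^ t * |δ 0| + εH / μ := by
  refine ⟨by linarith, by linarith, ?_, ?_⟩
  · rw [sub_sub_cancel]
    field_simp
  · intro t
    induction t with
    | zero =>
      have : 0 ≤ εH / μ := by positivity
      simpa using this
    | succ t ih =>
      have hstep := abs_step_le hη hηκμ (hslope _ (hinN t)) (hlip _ (hinN t))
      have hfix : (1 - η * μ) * (εH / μ) + η * εH = εH / μ := by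
        field_simp
        ring
      have ha : 0 ≤ 1 - η * μ := by linarith
      calc |δ (t + 1)|
          ≤ |δ t + η * (g (xstar + δ t) - g xstar)| + |η * e t| := by
            rw [hupd t]
            exact abs_add_le _ _
        _ ≤ (1 - η * μ) * |δ t| + η * εH := by
            rw [abs_mul, abs_of_pos hη]
            exact add_le_add hstep (mul_le_mul_of_nonneg_left (hnoise t) hη.le)
        _ ≤ (1 - η * μ) * ((1 - η * μ) ^ t * |δ 0| + εH / μ) + η * εH := by gcongr
        _ = (1 - η * μ) ^ (t + 1) * |δ 0| + ((1 - η * μ) * (εH / μ) + η * εH) := by ring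
        _ = (1 - η * μ) ^ (t + 1) * |δ 0| + εH / μ := by rw [hfix]
end

section
/- Let g : ℝ → ℝ, x* ∈ ℝ, r > 0, μ > 0, κ ≥ μ, and η > 0 with η μ ≤ 1 and η (κ + μ) ≤ 2. Assume for all δ with |δ| ≤ r that δ · (g(x* + δ) − g(x*)) ≤ −μ δ² and |g(x* + δ) − g(x*)| ≤ κ |δ|. Define the noise-free update G(x) = x + η (g(x) − g(x*)). Then: (a) G maps the interval [x* − r, x* + r] into itself; (b) for every x ∈ [x* − r, x* + r], |G(x) − x*| ≤ (1 − η μ) |x − x*|; and (c) for any initial point x₀ ∈ [x* − r, x* + r], the iterates x_{t+1} = G(x_t) satisfy |x_t − x*| ≤ (1 − η μ)^t |x₀ − x*| for all t, and hence x_t → x* as t → ∞. -/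
/-!
Write `d = x - x*` and `D = g x - g x*`. The slope condition gives `D ≤ -μ d` for `d > 0`
(and the reverse for `d < 0`), while the Lipschitz bound limits `D` from the other side by `-κ d`.
Hence `d + η D` lies between `(1 - η κ) d` and `(1 - η μ) d`, and `η (κ + μ) ≤ 2` says exactly that
`-(1 - η κ) ≤ 1 - η μ`. This contraction towards `x*` yields invariance of the interval, and
induction together with `0 ≤ 1 - η μ < 1` yields geometric convergence.
-/

/-- One step of the update, in terms of the displacement `d` from equilibrium and the
response `D` at that displacement. -/
lemma abs_add_mul_le_of_slope {μ κ η d D : ℝ} (hη : 0 < η)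
    (hηκμ : η * (κ + μ) ≤ 2) (hs : d * D ≤ -μ * d ^ 2) (hl : |D| ≤ κ * |d|) :
    |d + η * D| ≤ (1 - η * μ) * |d| := by
  rcases lt_trichotomy d 0 with hd | rfl | hd
  · rw [abs_of_neg hd] at hl ⊢
    have h1 : -μ * d ≤ D := by nlinarith
    have h2 := mul_le_mul_of_nonneg_left h1 hη.le
    have h3 := mul_le_mul_of_nonneg_left (abs_le.mp hl).2 hη.le
    rw [abs_le]
    constructor <;> nlinarith
  · have : D = 0 := by simpa using hl
    simp [this]
  · rw [abs_of_pos hd] at hl ⊢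
    have h1 : D ≤ -μ * d := by nlinarith
    have h2 := mul_le_mul_of_nonneg_left h1 hη.le
    have h3 := mul_le_mul_of_nonneg_left (abs_le.mp hl).1 hη.le
    rw [abs_le]
    constructor <;> nlinarith

/-- Noise-free convergence of the log-domain update `G(x) = x + η (g(x) − g(x*))`:
(a) `G` maps `[x* − r, x* + r]` into itself; (b) `G` contracts toward `x*` with factor
`1 − η μ`; (c) iterates from the interval converge geometrically to `x*`. -/
theorem noise_free_convergence (g : ℝ → ℝ) (xstar r μ κ η : ℝ)
    (hr : 0 < r) (hμ : 0 < μ) (hκ : μ ≤ κ) (hη : 0 < η)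
    (hημ : η * μ ≤ 1) (hηκμ : η * (κ + μ) ≤ 2)
    (hslope : ∀ d : ℝ, |d| ≤ r → d * (g (xstar + d) - g xstar) ≤ -μ * d ^ 2)
    (hlip : ∀ d : ℝ, |d| ≤ r → |g (xstar + d) - g xstar| ≤ κ * |d|) :
    (∀ x ∈ Set.Icc (xstar - r) (xstar + r),
        x + η * (g x - g xstar) ∈ Set.Icc (xstar - r) (xstar + r)) ∧
    (∀ x ∈ Set.Icc (xstar - r) (xstar + r),
        |x + η * (g x - g xstar) - xstar| ≤ (1 - η * μ) * |x - xstar|) ∧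
    (∀ x : ℕ → ℝ, x 0 ∈ Set.Icc (xstar - r) (xstar + r) →
      (∀ t, x (t + 1) = x t + η * (g (x t) - g xstar)) →
      (∀ t, |x t - xstar| ≤ (1 - η * μ) ^ t * |x 0 - xstar|) ∧
      Filter.Tendsto x Filter.atTop (nhds xstar)) := by
  have hmem : ∀ x, x ∈ Set.Icc (xstar - r) (xstar + r) ↔ |x - xstar| ≤ r := by
    intro x
    rw [Set.mem_Icc, abs_le]
    constructor <;> rintro ⟨h1, h2⟩ <;> constructor <;> linarith
  have hb : ∀ x ∈ Set.Icc (xstar - r) (xstar + r),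
      |x + η * (g x - g xstar) - xstar| ≤ (1 - η * μ) * |x - xstar| := by
    intro x hx
    have hd := (hmem x).1 hx
    have hs := hslope _ hd
    have hl := hlip _ hd
    rw [add_sub_cancel] at hs hl
    rw [add_sub_right_comm]
    exact abs_add_mul_le_of_slope hη hηκμ hs hl
  have h0 : 0 ≤ 1 - η * μ := by linarith
  have h1 : 1 - η * μ < 1 := by linarith [mul_pos hη hμ]
  have ha : ∀ x ∈ Set.Icc (xstar - r) (xstar + r),
      x + η * (g x - g xstar) ∈ Set.Icc (xstar - r) (xstar + r) := fun x hx =>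
    (hmem _).2 <| (hb x hx).trans <|
      (mul_le_of_le_one_left (abs_nonneg _) h1.le).trans ((hmem x).1 hx)
  refine ⟨ha, hb, fun x hx0 hstep => ?_⟩
  have hin : ∀ t, x t ∈ Set.Icc (xstar - r) (xstar + r) := by
    intro t
    induction t with
    | zero => exact hx0
    | succ t ih => rw [hstep]; exact ha _ ih
  have hgeo : ∀ t, |x t - xstar| ≤ (1 - η * μ) ^ t * |x 0 - xstar| := by
    intro t
    induction t with
    | zero => simp
    | succ t ih =>
      rw [hstep, pow_succ', mul_assoc]
      exact (hb _ (hin t)).trans (mul_le_mul_of_nonneg_left ih h0)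
  refine ⟨hgeo, ?_⟩
  rw [tendsto_iff_dist_tendsto_zero]
  refine squeeze_zero (fun _ => dist_nonneg) hgeo ?_
  simpa using (tendsto_pow_atTop_nhds_zero_of_lt_one h0 h1).mul_const |x 0 - xstar|
end
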